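/- arXiv:0906.1056 — 6 statements merged into one kernel-verified Lean document; each statement's English description precedes it below -/
import Mathlib

section
/- Let J₊ and J₋ be two complex structures (linear endomorphisms squaring to −id) on a real vector space V. Then J₊ ∘ [J₊,J₋] ∘ J₊ = [J₊,J₋] and J₋ ∘ [J₊,J₋] ∘ J₋ = [J₊,J₋]. (Equivalently, the bivector σ = [J₊,J₋]g⁻¹ is of type (2,0)+(0,2) with respect to both complex structures, so that σ is the real part of a holomorphic Poisson structure for each of J₊ and J₋.) -/
/-! The commutator with `a` is a derivation, so `j⁅j, a⁆ + ⁅j, a⁆j = ⁅j², a⁆`, which vanishes when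
`j² = -1`. Thus `j` anticommutes with `⁅j, a⁆`, and `j⁅j, a⁆j = -⁅j, a⁆j² = ⁅j, a⁆`. -/

section NonUnitalRing

variable {R : Type*} [NonUnitalRing R]

theorem lie_mul_left_eq_mul_lie_add_lie_mul (a b c : R) : ⁅a * b, c⁆ = a * ⁅b, c⁆ + ⁅a, c⁆ * b := by
  simp only [Ring.lie_def]
  noncomm_ring

theorem mul_lie_eq_neg_lie_mul_of_commute_mul_self {j a : R} (h : Commute (j * j) a) :
    j * ⁅j, a⁆ = -(⁅j, a⁆ * j) :=
  eq_neg_of_add_eq_zero_left <| (lie_mul_left_eq_mul_lie_add_lie_mul j j a).symm.trans h.lie_eq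

end NonUnitalRing

section Ring

variable {R : Type*} [Ring R] {j k : R}

theorem mul_lie_mul_eq_lie_of_mul_self_eq_neg_one (hj : j * j = -1) (a : R) :
    j * ⁅j, a⁆ * j = ⁅j, a⁆ := by
  have hcomm : Commute (j * j) a := hj ▸ Commute.neg_one_left a
  calc
    j * ⁅j, a⁆ * j = -(⁅j, a⁆ * (j * j)) := by
      rw [mul_lie_eq_neg_lie_mul_of_commute_mul_self hcomm, neg_mul, mul_assoc]
    _ = ⁅j, a⁆ := by rw [hj, mul_neg_one, neg_neg]

theorem commutator_type_20_02_general (hj : j * j = -1) (hk : k * k = -1) :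
    j * ⁅j, k⁆ * j = ⁅j, k⁆ ∧ k * ⁅j, k⁆ * k = ⁅j, k⁆ := by
  have hskew : ⁅j, k⁆ = -⁅k, j⁆ := (neg_sub _ _).symm
  refine ⟨mul_lie_mul_eq_lie_of_mul_self_eq_neg_one hj k, ?_⟩
  rw [hskew, mul_neg, neg_mul, mul_lie_mul_eq_lie_of_mul_self_eq_neg_one hk]

end Ring

/-- For two complex structures `J₊`, `J₋` on a real vector space,
`J₊ ∘ [J₊,J₋] ∘ J₊ = [J₊,J₋]` and `J₋ ∘ [J₊,J₋] ∘ J₋ = [J₊,J₋]`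
(i.e. `σ = [J₊,J₋] g⁻¹` is of type (2,0)+(0,2) for both complex structures). -/
theorem commutator_type_20_02
    {V : Type*} [AddCommGroup V] [Module ℝ V]
    (Jp Jm : V →ₗ[ℝ] V)
    (hJp : Jp ∘ₗ Jp = -LinearMap.id) (hJm : Jm ∘ₗ Jm = -LinearMap.id) :
    Jp ∘ₗ (Jp ∘ₗ Jm - Jm ∘ₗ Jp) ∘ₗ Jp = Jp ∘ₗ Jm - Jm ∘ₗ Jp ∧
    Jm ∘ₗ (Jp ∘ₗ Jm - Jm ∘ₗ Jp) ∘ₗ Jm = Jp ∘ₗ Jm - Jm ∘ₗ Jp :=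
  commutator_type_20_02_general (R := Module.End ℝ V) hJp hJm
end

section
/- Let J₊ and J₋ be two complex structures (linear endomorphisms squaring to −id) on a real vector space V. Then the range of [J₊,J₋] is contained in the intersection of the range of J₊ + J₋ and the range of J₊ − J₋. (This is the linear-algebra statement that every symplectic leaf of the Poisson structure σ = [J₊,J₋]g⁻¹ lies inside a leaf of each of the Poisson structures π± = (J₊ ± J₋)g⁻¹ on a generalized Kähler manifold.) -/
section Ring

variable {A : Type*} [NonUnitalNonAssocRing A] {a b : A}

theorem commutator_eq_add_mul_sub_of_mul_self_eq (h : a * a = b * b) :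
    a * b - b * a = (a + b) * (b - a) := by
  rw [add_mul, mul_sub, mul_sub, h]
  abel

theorem commutator_eq_sub_mul_add_of_mul_self_eq (h : a * a = b * b) :
    a * b - b * a = (a - b) * (a + b) := by
  rw [sub_mul, mul_add, mul_add, h]
  abel

end Ring

section Range

variable {R M : Type*} [Semiring R] [AddCommGroup M] [Module R M] {f g : M →ₗ[R] M}

theorem range_commutator_le_range_add_of_comp_self_eq (h : f ∘ₗ f = g ∘ₗ g) :
    LinearMap.range (f ∘ₗ g - g ∘ₗ f) ≤ LinearMap.range (f + g) := by
  have factorization : f ∘ₗ g - g ∘ₗ f = (f + g) ∘ₗ (g - f) :=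
    commutator_eq_add_mul_sub_of_mul_self_eq (A := Module.End R M) h
  rw [factorization]
  exact LinearMap.range_comp_le_range _ _

theorem range_commutator_le_range_sub_of_comp_self_eq (h : f ∘ₗ f = g ∘ₗ g) :
    LinearMap.range (f ∘ₗ g - g ∘ₗ f) ≤ LinearMap.range (f - g) := by
  have factorization : f ∘ₗ g - g ∘ₗ f = (f - g) ∘ₗ (f + g) :=
    commutator_eq_sub_mul_add_of_mul_self_eq (A := Module.End R M) h
  rw [factorization]
  exact LinearMap.range_comp_le_range _ _

theorem range_commutator_le_inf_ranges_general (h : f ∘ₗ f = g ∘ₗ g) :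
    LinearMap.range (f ∘ₗ g - g ∘ₗ f) ≤ LinearMap.range (f + g) ⊓ LinearMap.range (f - g) :=
  le_inf (range_commutator_le_range_add_of_comp_self_eq h)
    (range_commutator_le_range_sub_of_comp_self_eq h)

end Range

/-- For two complex structures `J₊`, `J₋` on a real vector space,
the range of `[J₊,J₋]` is contained in the intersection of the ranges of
`J₊ + J₋` and `J₊ − J₋` (a leaf of `σ` lies inside leaves of `π±`). -/
theorem range_commutator_le_inf_ranges
    {V : Type*} [AddCommGroup V] [Module ℝ V]
    (Jp Jm : V →ₗ[ℝ] V)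
    (hJp : Jp ∘ₗ Jp = -LinearMap.id) (hJm : Jm ∘ₗ Jm = -LinearMap.id) :
    LinearMap.range (Jp ∘ₗ Jm - Jm ∘ₗ Jp) ≤
      LinearMap.range (Jp + Jm) ⊓ LinearMap.range (Jp - Jm) :=
  range_commutator_le_inf_ranges_general (hJp.trans hJm.symm)
end

section
/- Let J₊ and J₋ be two complex structures (linear endomorphisms squaring to −id) on a real vector space V. Then the kernel of [J₊,J₋] is the (internal direct) sum of the kernel of J₊ + J₋ and the kernel of J₊ − J₋: ker[J₊,J₋] = ker(J₊ + J₋) ⊕ ker(J₊ − J₋), these two subspaces having trivial intersection. -/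
/-!
Put `A = J₊ - J₋` and `B = J₊ + J₋`. Since `J₊² = J₋²`, these endomorphisms anticommute with
`A B = [J₊, J₋]`, while `A² + B² = 2 (J₊² + J₋²)` is invertible and commutes with `A` and `B`.
Writing `v = (A² + B²) w`, the condition `A B v = 0` forces `A B w = 0`, and then `v = B² w + A² w`
splits `v` into its components in `ker A` and `ker B`.
-/

section Ring

variable {S : Type*} [Ring S] {a b : S}

theorem commute_sq_of_mul_eq_neg_mul (h : a * b = -(b * a)) : Commute a (b ^ 2) := by
  have hab : SemiconjBy a b (-b) := by rw [SemiconjBy, h, neg_mul]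
  have hsq : SemiconjBy a (b ^ 2) ((-b) ^ 2) := hab.pow_right 2
  rwa [neg_sq] at hsq

theorem commute_mul_sq_add_sq_of_mul_eq_neg_mul (h : a * b = -(b * a)) :
    Commute (a * b) (a ^ 2 + b ^ 2) := by
  have h' : b * a = -(a * b) := by rw [h, neg_neg]
  have ha : Commute a (a ^ 2 + b ^ 2) :=
    (Commute.self_pow a 2).add_right (commute_sq_of_mul_eq_neg_mul h)
  have hb : Commute b (a ^ 2 + b ^ 2) :=
    (commute_sq_of_mul_eq_neg_mul h').add_right (Commute.self_pow b 2)
  exact ha.mul_left hb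

theorem sub_mul_add_eq_commutator_of_sq_eq_sq (h : a ^ 2 = b ^ 2) :
    (a - b) * (a + b) = a * b - b * a := by
  calc (a - b) * (a + b) = a * b - b * a + (a ^ 2 - b ^ 2) := by noncomm_ring
    _ = a * b - b * a := by rw [h, sub_self, add_zero]

theorem sub_mul_add_eq_neg_add_mul_sub_of_sq_eq_sq (h : a ^ 2 = b ^ 2) :
    (a - b) * (a + b) = -((a + b) * (a - b)) := by
  calc (a - b) * (a + b) = -((a + b) * (a - b)) + 2 * (a ^ 2 - b ^ 2) := by noncomm_ring
    _ = -((a + b) * (a - b)) := by rw [h, sub_self, mul_zero, add_zero]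

theorem isUnit_sub_sq_add_add_sq_of_sq_eq_sq (h : a ^ 2 = b ^ 2) (ha : IsUnit a)
    (h2 : IsUnit (2 : S)) : IsUnit ((a - b) ^ 2 + (a + b) ^ 2) := by
  have hsum : (a - b) ^ 2 + (a + b) ^ 2 = 2 * (2 * a ^ 2) := by
    calc (a - b) ^ 2 + (a + b) ^ 2 = 2 * (a ^ 2 + b ^ 2) := by noncomm_ring
      _ = 2 * (2 * a ^ 2) := by rw [← h, two_mul (a ^ 2)]
  rw [hsum]
  exact h2.mul (h2.mul (ha.pow 2))

theorem isUnit_of_sq_eq_neg_one (h : a ^ 2 = -1) : IsUnit a :=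
  (isUnit_pow_iff two_ne_zero).mp (h ▸ isUnit_one.neg)

end Ring

section Module

variable {R M : Type*} [Ring R] [AddCommGroup M] [Module R M] {A B : Module.End R M}

theorem disjoint_ker_of_isUnit_sq_add_sq (hu : IsUnit (A ^ 2 + B ^ 2)) :
    Disjoint (LinearMap.ker A) (LinearMap.ker B) := by
  rw [Submodule.disjoint_def]
  intro v hA hB
  rw [LinearMap.mem_ker] at hA hB
  apply ((Module.End.isUnit_iff _).mp hu).injective
  simp only [sq, LinearMap.add_apply, Module.End.mul_apply, hA, hB, map_zero, add_zero]

theorem ker_sup_ker_le_ker_mul_of_mul_eq_neg_mul (h : A * B = -(B * A)) :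
    LinearMap.ker A ⊔ LinearMap.ker B ≤ LinearMap.ker (A * B) := by
  refine sup_le (fun v hv ↦ ?_) (LinearMap.ker_le_ker_comp B A)
  rw [LinearMap.mem_ker] at hv ⊢
  rw [h, LinearMap.neg_apply, Module.End.mul_apply, hv, map_zero, neg_zero]

theorem ker_mul_le_ker_sup_ker_of_mul_eq_neg_mul (h : A * B = -(B * A))
    (hu : IsUnit (A ^ 2 + B ^ 2)) :
    LinearMap.ker (A * B) ≤ LinearMap.ker A ⊔ LinearMap.ker B := by
  intro v hv
  have h' : B * A = -(A * B) := by rw [h, neg_neg]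
  have hbij := (Module.End.isUnit_iff _).mp hu
  obtain ⟨w, rfl⟩ := hbij.surjective v
  have hw : (A * B) w = 0 := by
    apply hbij.injective
    rw [map_zero, ← Module.End.mul_apply, ← (commute_mul_sq_add_sq_of_mul_eq_neg_mul h).eq]
    exact hv
  have hA : (B ^ 2) w ∈ LinearMap.ker A := by
    have hAB : A * B ^ 2 = -(B * (A * B)) := by
      calc A * B ^ 2 = A * B * B := by rw [sq, mul_assoc]
        _ = -(B * A) * B := by rw [h]
        _ = -(B * (A * B)) := by rw [neg_mul, mul_assoc]
    rw [LinearMap.mem_ker, ← Module.End.mul_apply, hAB, LinearMap.neg_apply, Module.End.mul_apply,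
      hw, map_zero, neg_zero]
  have hB : (A ^ 2) w ∈ LinearMap.ker B := by
    have hBA : B * A ^ 2 = A * (A * B) := by
      calc B * A ^ 2 = A ^ 2 * B := (commute_sq_of_mul_eq_neg_mul h').eq
        _ = A * (A * B) := by rw [sq, mul_assoc]
    rw [LinearMap.mem_ker, ← Module.End.mul_apply, hBA, Module.End.mul_apply, hw, map_zero]
  rw [LinearMap.add_apply, add_comm]
  exact Submodule.add_mem_sup hA hB

theorem ker_mul_eq_ker_sup_ker_of_mul_eq_neg_mul (h : A * B = -(B * A))
    (hu : IsUnit (A ^ 2 + B ^ 2)) :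
    LinearMap.ker (A * B) = LinearMap.ker A ⊔ LinearMap.ker B :=
  le_antisymm (ker_mul_le_ker_sup_ker_of_mul_eq_neg_mul h hu)
    (ker_sup_ker_le_ker_mul_of_mul_eq_neg_mul h)

theorem ker_commutator_eq_ker_sum_sup_ker_diff_general (Jp Jm : Module.End R M)
    (hsq : Jp ^ 2 = Jm ^ 2) (hJp : IsUnit Jp) (h2 : IsUnit (2 : Module.End R M)) :
    LinearMap.ker (Jp * Jm - Jm * Jp) = LinearMap.ker (Jp + Jm) ⊔ LinearMap.ker (Jp - Jm) ∧
      LinearMap.ker (Jp + Jm) ⊓ LinearMap.ker (Jp - Jm) = ⊥ := by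
  have hanti := sub_mul_add_eq_neg_add_mul_sub_of_sq_eq_sq hsq
  have hunit := isUnit_sub_sq_add_add_sq_of_sq_eq_sq hsq hJp h2
  constructor
  · rw [← sub_mul_add_eq_commutator_of_sq_eq_sq hsq, sup_comm]
    exact ker_mul_eq_ker_sup_ker_of_mul_eq_neg_mul hanti hunit
  · exact (disjoint_ker_of_isUnit_sq_add_sq hunit).symm.eq_bot

end Module

/-- For two complex structures `J₊`, `J₋` on a real vector space,
`ker [J₊,J₋] = ker (J₊+J₋) ⊕ ker (J₊−J₋)` as an internal direct sum:
the kernel of the commutator is the sum of the two kernels, and these have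
trivial intersection. -/
theorem ker_commutator_eq_ker_sum_sup_ker_diff
    {V : Type*} [AddCommGroup V] [Module ℝ V]
    (Jp Jm : V →ₗ[ℝ] V)
    (hJp : Jp ∘ₗ Jp = -LinearMap.id) (hJm : Jm ∘ₗ Jm = -LinearMap.id) :
    LinearMap.ker (Jp ∘ₗ Jm - Jm ∘ₗ Jp) =
      LinearMap.ker (Jp + Jm) ⊔ LinearMap.ker (Jp - Jm) ∧
    LinearMap.ker (Jp + Jm) ⊓ LinearMap.ker (Jp - Jm) = ⊥ := by
  have hp : (Jp : Module.End ℝ V) ^ 2 = -1 := (sq _).trans hJp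
  have hm : (Jm : Module.End ℝ V) ^ 2 = -1 := (sq _).trans hJm
  have h2 : IsUnit (2 : Module.End ℝ V) :=
    map_ofNat (algebraMap ℝ (Module.End ℝ V)) 2 ▸ (IsUnit.mk0 (2 : ℝ) two_ne_zero).map _
  exact ker_commutator_eq_ker_sum_sup_ker_diff_general Jp Jm (hp.trans hm.symm)
    (isUnit_of_sq_eq_neg_one hp) h2
end

section
/- Let J₊ and J₋ be two Hermitian complex structures on a finite-dimensional real inner product space V. Then the range of [J₊,J₋] equals the intersection of the range of J₊ + J₋ and the range of J₊ − J₋. (This is the linear-algebra statement that on a generalized Kähler manifold the symplectic leaves of the Poisson structures π₊ = (J₊ + J₋)g⁻¹ and π₋ = (J₊ − J₋)g⁻¹ intersect exactly along a leaf of σ = [J₊,J₋]g⁻¹.) -/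
/-!
Put `A = J₊ + J₋` and `B = J₊ - J₋`. Since `J₊² = J₋²`, these anticommute, with
`B A = -A B = [J₊,J₋]`, and `A² + B² = 4 J₊²` is invertible. For any anticommuting `f` and `g` the
operator `f² + g²` commutes with `f g`, and if `v = f x = g y` then
`(f² + g²) v = f² g y + g² f x = f g (g x - f y)`; so when `f² + g²` is invertible, the range of
`f g` is all of `range f ⊓ range g`.
-/

open RealInnerProductSpace

section Ring

variable {A : Type*} [Ring A] {a b : A}

theorem commute_mul_self_of_anticommute (h : a * b = -(b * a)) : Commute (a * a) b := by
  calc a * a * b = a * -(b * a) := by rw [mul_assoc, h]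
    _ = -(a * b) * a := by rw [mul_neg, neg_mul, mul_assoc]
    _ = b * (a * a) := by rw [h, neg_neg, mul_assoc]

theorem commute_mul_add_mul_self_of_anticommute (h : a * b = -(b * a)) :
    Commute (a * b) (a * a + b * b) := by
  have h_symm : b * a = -(a * b) := by rw [h, neg_neg]
  have ha : Commute (a * b) (a * a) :=
    ((Commute.refl a).mul_right (.refl a)).mul_left (commute_mul_self_of_anticommute h).symm
  have hb : Commute (a * b) (b * b) :=
    (commute_mul_self_of_anticommute h_symm).symm.mul_left ((Commute.refl b).mul_right (.refl b))
  exact ha.add_right hb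

theorem sub_mul_add_eq_commutator_of_mul_self_eq (h : a * a = b * b) :
    (a - b) * (a + b) = a * b - b * a := by
  rw [sub_mul, mul_add, mul_add, h]
  abel

theorem sub_anticommute_add_of_mul_self_eq (h : a * a = b * b) :
    (a - b) * (a + b) = -((a + b) * (a - b)) := by
  rw [sub_mul_add_eq_commutator_of_mul_self_eq h, add_mul, mul_sub, mul_sub, h]
  abel

theorem sub_mul_self_add_add_mul_self (a b : A) :
    (a - b) * (a - b) + (a + b) * (a + b) = 2 * (a * a + b * b) := by
  noncomm_ring

theorem isUnit_of_mul_self_eq_neg_one (h : a * a = -1) : IsUnit a := by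
  rw [← isUnit_pow_iff two_ne_zero, sq, h]
  exact isUnit_one.neg

end Ring

theorem isUnit_two_of_algebra {R : Type*} (A : Type*) [CommRing R] [Ring A] [Algebra R A]
    (h : IsUnit (2 : R)) : IsUnit (2 : A) := by
  simpa only [map_ofNat] using h.map (algebraMap R A)

section Module

variable {R M : Type*} [Ring R] [AddCommGroup M] [Module R M] {f g : Module.End R M}

theorem range_mul_le_inf_range_of_anticommute (h : f * g = -(g * f)) :
    LinearMap.range (f * g) ≤ LinearMap.range f ⊓ LinearMap.range g := by
  refine le_inf (LinearMap.range_comp_le_range g f) ?_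
  rw [h, LinearMap.range_neg]
  exact LinearMap.range_comp_le_range f g

theorem mul_self_add_mul_self_apply_of_anticommute (h : f * g = -(g * f)) {v x y : M}
    (hx : f x = v) (hy : g y = v) : (f * f + g * g) v = (f * g) (g x - f y) := by
  have hfg (z : M) : f (g z) = -g (f z) := LinearMap.congr_fun h z
  calc (f * f + g * g) v = f (f (g y)) + g (g (f x)) := by
        rw [hx, hy]
        rfl
    _ = (f * g) (g x - f y) := by
        simp only [Module.End.mul_apply, map_sub, map_neg, hfg]
        abel

theorem range_mul_eq_inf_range_of_anticommute (h : f * g = -(g * f))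
    (h_unit : IsUnit (f * f + g * g)) :
    LinearMap.range (f * g) = LinearMap.range f ⊓ LinearMap.range g := by
  refine le_antisymm (range_mul_le_inf_range_of_anticommute h) ?_
  rintro v ⟨⟨x, hx⟩, ⟨y, hy⟩⟩
  have h_bij := (Module.End.isUnit_iff _).mp h_unit
  obtain ⟨w, hw⟩ := h_bij.surjective (g x - f y)
  refine ⟨w, h_bij.injective ?_⟩
  calc (f * f + g * g) ((f * g) w) = (f * g) ((f * f + g * g) w) :=
        (LinearMap.congr_fun (commute_mul_add_mul_self_of_anticommute h) w).symm
    _ = (f * f + g * g) v := by rw [hw, mul_self_add_mul_self_apply_of_anticommute h hx hy]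

theorem range_commutator_eq_inf_ranges_general (h2 : IsUnit (2 : Module.End R M))
    (hf : IsUnit f) (hfg : f * f = g * g) :
    LinearMap.range (f * g - g * f) = LinearMap.range (f + g) ⊓ LinearMap.range (f - g) := by
  have h_unit : IsUnit ((f - g) * (f - g) + (f + g) * (f + g)) := by
    rw [sub_mul_self_add_add_mul_self, ← hfg, ← two_mul]
    exact h2.mul (h2.mul (hf.mul hf))
  rw [← sub_mul_add_eq_commutator_of_mul_self_eq hfg, inf_comm]
  exact range_mul_eq_inf_range_of_anticommute (sub_anticommute_add_of_mul_self_eq hfg) h_unit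

end Module

/-- For two Hermitian complex structures `J₊`, `J₋` on a
finite-dimensional real inner product space, the range of `[J₊,J₋]` equals the
intersection of the ranges of `J₊ + J₋` and `J₊ − J₋` (the leaves of `π₊` and
`π₋` intersect exactly along a leaf of `σ`). -/
theorem range_commutator_eq_inf_ranges
    {V : Type*} [NormedAddCommGroup V] [InnerProductSpace ℝ V]
    [FiniteDimensional ℝ V]
    (Jp Jm : V →ₗ[ℝ] V)
    (hJp : Jp ∘ₗ Jp = -LinearMap.id) (hJm : Jm ∘ₗ Jm = -LinearMap.id)
    (hJpH : ∀ x y : V, ⟪Jp x, Jp y⟫ = ⟪x, y⟫)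
    (hJmH : ∀ x y : V, ⟪Jm x, Jm y⟫ = ⟪x, y⟫) :
    LinearMap.range (Jp ∘ₗ Jm - Jm ∘ₗ Jp) =
      LinearMap.range (Jp + Jm) ⊓ LinearMap.range (Jp - Jm) := by
  exact range_commutator_eq_inf_ranges_general (isUnit_two_of_algebra _ (.mk0 (2 : ℝ) two_ne_zero))
    (isUnit_of_mul_self_eq_neg_one hJp) (hJp.trans hJm.symm)
end

section
/- Let J₊ and J₋ be two complex structures (linear endomorphisms squaring to −id) on a real vector space V such that S = [J₊,J₋] is invertible. Then J₊ ∘ S⁻¹ ∘ J₊ = S⁻¹ and J₋ ∘ S⁻¹ ∘ J₋ = S⁻¹. (Equivalently, the symplectic form Ω = σ⁻¹ is of type (2,0)+(0,2) with respect to both complex structures, so that Ω + iΩ± are holomorphic symplectic structures for J±.) -/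
/-! If `J²` commutes with `K`, then `S = ⁅J, K⁆ = JK - KJ` satisfies `SJ + JS = J²K - KJ² = 0`.
So for `J² = K² = -1` the commutator `S`, and with it `S⁻¹`, anticommutes with both `J` and `K`,
and moving one factor past `S⁻¹` gives `J S⁻¹ J = -J² S⁻¹ = S⁻¹`.
Anticommutation of `s` and `a` is expressed as `SemiconjBy s a (-a)`. -/

section NonUnitalRing

variable {R : Type*} [NonUnitalRing R] {a b : R}

theorem semiconjBy_lie_neg_left (h : Commute (a * a) b) : SemiconjBy ⁅a, b⁆ a (-a) :=
  calc ⁅a, b⁆ * a = a * b * a - b * (a * a) := by rw [Ring.lie_def, sub_mul, mul_assoc b]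
    _ = a * b * a - a * a * b := by rw [h.eq]
    _ = -a * ⁅a, b⁆ := by rw [Ring.lie_def, neg_mul, mul_sub, neg_sub, mul_assoc, mul_assoc]

theorem semiconjBy_lie_neg_right (h : Commute a (b * b)) : SemiconjBy ⁅a, b⁆ b (-b) := by
  rw [Ring.lie_def, ← neg_sub, ← Ring.lie_def]
  exact (semiconjBy_lie_neg_left h.symm).neg_left

end NonUnitalRing

section Ring

variable {R : Type*} [Ring R]

theorem mul_mul_self_of_semiconjBy_neg {a t : R} (ha : a * a = -1) (h : SemiconjBy t a (-a)) :
    a * (t * a) = t := by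
  rw [h.eq, neg_mul, mul_neg, ← mul_assoc, ha, neg_one_mul, neg_neg]

theorem mul_units_inv_mul_self_of_semiconjBy_neg {a : R} {s : Rˣ} (ha : a * a = -1)
    (h : SemiconjBy (s : R) a (-a)) : a * (↑s⁻¹ * a) = ↑s⁻¹ := by
  have h_inv : SemiconjBy (↑s⁻¹ : R) (-a) a := h.units_inv_symm_left
  exact mul_mul_self_of_semiconjBy_neg ha (by simpa only [neg_neg] using h_inv.neg_right)

theorem inv_commutator_type_20_02_general {J K : R} {S : Rˣ} (hJ : J * J = -1) (hK : K * K = -1)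
    (hS : (S : R) = ⁅J, K⁆) : J * (↑S⁻¹ * J) = ↑S⁻¹ ∧ K * (↑S⁻¹ * K) = ↑S⁻¹ := by
  have hSJ : SemiconjBy (S : R) J (-J) :=
    hS ▸ semiconjBy_lie_neg_left (hJ ▸ Commute.neg_one_left K)
  have hSK : SemiconjBy (S : R) K (-K) :=
    hS ▸ semiconjBy_lie_neg_right (hK ▸ Commute.neg_one_right J)
  exact ⟨mul_units_inv_mul_self_of_semiconjBy_neg hJ hSJ,
    mul_units_inv_mul_self_of_semiconjBy_neg hK hSK⟩

end Ring

/-- If `J₊`, `J₋` are complex structures on a real vector space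
and `S = [J₊,J₋]` is invertible with inverse `Sinv`, then
`J₊ ∘ S⁻¹ ∘ J₊ = S⁻¹` and `J₋ ∘ S⁻¹ ∘ J₋ = S⁻¹` (the symplectic form
`Ω = σ⁻¹` is of type (2,0)+(0,2) with respect to both complex structures). -/
theorem inv_commutator_type_20_02
    {V : Type*} [AddCommGroup V] [Module ℝ V]
    (Jp Jm Sinv : V →ₗ[ℝ] V)
    (hJp : Jp ∘ₗ Jp = -LinearMap.id) (hJm : Jm ∘ₗ Jm = -LinearMap.id)
    (hSl : Sinv ∘ₗ (Jp ∘ₗ Jm - Jm ∘ₗ Jp) = LinearMap.id)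
    (hSr : (Jp ∘ₗ Jm - Jm ∘ₗ Jp) ∘ₗ Sinv = LinearMap.id) :
    Jp ∘ₗ Sinv ∘ₗ Jp = Sinv ∧ Jm ∘ₗ Sinv ∘ₗ Jm = Sinv :=
  inv_commutator_type_20_02_general (R := Module.End ℝ V) (S := ⟨_, Sinv, hSr, hSl⟩) hJp hJm rfl
end

section
/- Let X be a set indexed over an index set I, and for each ordered pair (α,β) ∈ I × I let h⁺_{αβ}, h⁻_{αβ} : X → ℂ∖{0} be nonvanishing complex-valued functions, and for each ordered triple (α,β,γ) let G_{αβγ}, F_{αβγ} : X → ℂ∖{0} be nonvanishing functions. Suppose that at every point the 'bihermitian' conditions hold: G_{αβγ} · F_{αβγ}⁻¹ = h⁺_{αβ} h⁺_{βγ} h⁺_{γα} and G_{αβγ} · conj(F_{αβγ}) = h⁻_{αβ} h⁻_{βγ} h⁻_{γα}. Then the functions t_{αβ} := h⁺_{αβ} · conj(h⁻_{αβ}) · (h⁻_{αβ})⁻¹ · conj(h⁺_{αβ})⁻¹ satisfy the Čech cocycle condition t_{αβ} t_{βγ} t_{γα} = 1 at every point, for all triples (α,β,γ). (This is the cocycle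 underlying the existence of local generalized Kähler potentials K_α with t_{αβ} = e^{K_α}e^{−K_β} in the gerbe description of generalized Kähler geometry.) -/
open Complex

/-!
The map `z ↦ z / conj z` is multiplicative and sends every nonzero real number to `1`. Since
`t_{αβ}` is its value at `h⁺_{αβ} / h⁻_{αβ}`, the product of the `t`s over a triple is its value at
`(G F⁻¹) / (G conj F) = 1 / |F|²`, which is real.
-/

section DivConj

open scoped ComplexConjugate

variable {K : Type*} [Semifield K] [StarRing K]

/-- The homomorphism `z ↦ z / conj z`; for `z = r e^{iθ}` in `ℂ` with `r > 0` its value is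
`e^{2iθ}`, and it is extended by `0 ↦ 0` so as to be defined on all of `K`. -/
def divConj : K →*₀ K where
  toFun z := z / conj z
  map_zero' := zero_div _
  map_one' := by rw [map_one, div_one]
  map_mul' z w := by rw [map_mul, mul_div_mul_comm]

theorem divConj_apply (z : K) : divConj z = z / conj z := rfl

theorem divConj_eq_one_of_isSelfAdjoint {z : K} (hz : IsSelfAdjoint z) (hz₀ : z ≠ 0) :
    divConj z = 1 := by
  rw [divConj_apply, hz.conj_eq, div_self hz₀]

theorem divConj_div (z w : K) : divConj (z / w) = z * conj w * w⁻¹ * (conj z)⁻¹ := by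
  rw [divConj_apply, map_div₀, div_div_div_eq, div_eq_mul_inv, mul_inv, mul_assoc (z * conj w)]

theorem divConj_mul_inv_div_mul_conj {g f : K} (hg : g ≠ 0) (hf : f ≠ 0) :
    divConj (g * f⁻¹ / (g * conj f)) = 1 := by
  have quotient_eq : g * f⁻¹ / (g * conj f) = (f * conj f)⁻¹ := by
    rw [mul_div_mul_left _ _ hg, mul_inv, div_eq_mul_inv]
  have selfAdjoint : IsSelfAdjoint (f * conj f) := .mul_star_self f
  have ne_zero : f * conj f ≠ 0 := mul_ne_zero hf ((map_ne_zero _).2 hf)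
  rw [quotient_eq, map_inv₀, divConj_eq_one_of_isSelfAdjoint selfAdjoint ne_zero, inv_one]

theorem bihermitian_gerbe_cech_cocycle_general {X I : Type*}
    (hp hm : I → I → X → K) (G F : I → I → I → X → K)
    (G_ne : ∀ α β γ x, G α β γ x ≠ 0)
    (F_ne : ∀ α β γ x, F α β γ x ≠ 0)
    (hGF : ∀ α β γ x, G α β γ x * (F α β γ x)⁻¹ = hp α β x * hp β γ x * hp γ α x)
    (hGFbar : ∀ α β γ x, G α β γ x * conj (F α β γ x) = hm α β x * hm β γ x * hm γ α x)
    (t : I → I → X → K)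
    (ht : ∀ α β x, t α β x =
      hp α β x * conj (hm α β x) * (hm α β x)⁻¹ * (conj (hp α β x))⁻¹)
    (α β γ : I) (x : X) : t α β x * t β γ x * t γ α x = 1 := by
  have t_eq (α β : I) : t α β x = divConj (hp α β x / hm α β x) := by
    rw [ht, divConj_div]
  calc
    t α β x * t β γ x * t γ α x
      = divConj (hp α β x * hp β γ x * hp γ α x / (hm α β x * hm β γ x * hm γ α x)) := by
        simp only [t_eq, ← map_mul, div_mul_div_comm]
    _ = divConj (G α β γ x * (F α β γ x)⁻¹ / (G α β γ x * conj (F α β γ x))) := by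
        rw [hGF, hGFbar]
    _ = 1 := divConj_mul_inv_div_mul_conj (G_ne α β γ x) (F_ne α β γ x)

end DivConj

/-- Given nonvanishing functions `h⁺_{αβ}, h⁻_{αβ} : X → ℂ` on
double indices and `G_{αβγ}, F_{αβγ} : X → ℂ` on triple indices satisfying
the bihermitian conditions
`G·F⁻¹ = h⁺_{αβ} h⁺_{βγ} h⁺_{γα}` and `G·conj F = h⁻_{αβ} h⁻_{βγ} h⁻_{γα}`
pointwise, the functions
`t_{αβ} = h⁺_{αβ} · conj h⁻_{αβ} · (h⁻_{αβ})⁻¹ · (conj h⁺_{αβ})⁻¹`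
satisfy the Čech cocycle condition `t_{αβ} t_{βγ} t_{γα} = 1` pointwise. -/
theorem bihermitian_gerbe_cech_cocycle
    {X I : Type*}
    (hp hm : I → I → X → ℂ)
    (G F : I → I → I → X → ℂ)
    (hp_ne : ∀ α β x, hp α β x ≠ 0)
    (hm_ne : ∀ α β x, hm α β x ≠ 0)
    (G_ne : ∀ α β γ x, G α β γ x ≠ 0)
    (F_ne : ∀ α β γ x, F α β γ x ≠ 0)
    (hGF : ∀ α β γ x,
      G α β γ x * (F α β γ x)⁻¹ = hp α β x * hp β γ x * hp γ α x)
    (hGFbar : ∀ α β γ x,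
      G α β γ x * starRingEnd ℂ (F α β γ x) = hm α β x * hm β γ x * hm γ α x)
    (t : I → I → X → ℂ)
    (ht : ∀ α β x, t α β x =
      hp α β x * starRingEnd ℂ (hm α β x) * (hm α β x)⁻¹ *
        (starRingEnd ℂ (hp α β x))⁻¹) :
    ∀ α β γ x, t α β x * t β γ x * t γ α x = 1 :=
  bihermitian_gerbe_cech_cocycle_general hp hm G F G_ne F_ne hGF hGFbar t ht
end
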